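/- arXiv:2502.00869 — 5 statements merged into one kernel-verified Lean document; each statement's English description precedes it below -/
import Mathlib

section
/- Let ξ be a real number with |ξ| < 1, and let f(u, v) = (1/(2π√(1−ξ²))) · exp(−(u² − 2ξuv + v²)/(2(1−ξ²))) be the standard bivariate normal density with correlation ξ. Then for all real numbers Ω₁, Ω₂, Φ₁, Φ₂: ∫_{ℝ²} sin(Ω₁ u + Φ₁) · sin(Ω₂ v + Φ₂) · f(u, v) du dv = (1/2) · e^{−(Ω₁² + Ω₂²)/2} · ( e^{Ω₁Ω₂ξ} cos(Φ₁ − Φ₂) − e^{−Ω₁Ω₂ξ} cos(Φ₁ + Φ₂) ). -/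
open Real MeasureTheory

/-!
If `X` and `Y` are independent standard normal variables, then `f` is the density of
`(U, V) = (X, ξ X + √(1 - ξ ^ 2) Y)`: given `U = u`, the variable `V` is normal with mean `ξ u` and
variance `1 - ξ ^ 2`, and `f` is the product of the density of `U` and this conditional density.
In terms of `X` and `Y` the expectation of `exp (z U + w V)` factors into two one-dimensional
Gaussian moment generating functions, for all complex `z` and `w`. Taking real parts at imaginary
`z` and `w` gives the expectation of `cos (s U + t V + c)`, and a product of two sines is half a
difference of two such cosines.
-/

section BivariateGaussian

open ProbabilityTheory Complex
open scoped NNReal ENNReal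

/-- The density of the standard bivariate normal distribution with correlation `ξ`. For `|ξ| ≥ 1`
there is no density, and the formula gives the junk value `0`. -/
noncomputable def bivariateGaussianPDFReal (ξ : ℝ) (p : ℝ × ℝ) : ℝ :=
  1 / (2 * π * √(1 - ξ ^ 2)) *
    rexp (-(p.1 ^ 2 - 2 * ξ * p.1 * p.2 + p.2 ^ 2) / (2 * (1 - ξ ^ 2)))

/-- The standard bivariate normal distribution with correlation `ξ ∈ [-1, 1]`, as the joint law of
`X` and `ξ X + √(1 - ξ ^ 2) Y` for independent standard normal `X` and `Y`. This encoding
includes the degenerate cases `ξ = ±1`. -/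
noncomputable def bivariateGaussian (ξ : ℝ) : Measure (ℝ × ℝ) :=
  ((gaussianReal 0 1).prod (gaussianReal 0 1)).map fun p ↦ (p.1, ξ * p.1 + √(1 - ξ ^ 2) * p.2)

variable {ξ : ℝ}

instance isProbabilityMeasure_bivariateGaussian : IsProbabilityMeasure (bivariateGaussian ξ) :=
  Measure.isProbabilityMeasure_map (by fun_prop)

lemma measurable_bivariateGaussianPDFReal : Measurable (bivariateGaussianPDFReal ξ) := by
  unfold bivariateGaussianPDFReal
  fun_prop

lemma bivariateGaussianPDFReal_nonneg (p : ℝ × ℝ) : 0 ≤ bivariateGaussianPDFReal ξ p := by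
  unfold bivariateGaussianPDFReal
  positivity

lemma bivariateGaussianPDFReal_eq_mul (hξ : |ξ| < 1) (p : ℝ × ℝ) :
    bivariateGaussianPDFReal ξ p =
      gaussianPDFReal 0 1 p.1 * gaussianPDFReal (ξ * p.1) (1 - ξ ^ 2).toNNReal p.2 := by
  have hvar : 0 < 1 - ξ ^ 2 := sub_pos.2 ((sq_lt_one_iff_abs_lt_one ξ).2 hξ)
  have hconst : 1 / (2 * π * √(1 - ξ ^ 2)) = (√(2 * π))⁻¹ * (√(2 * π * (1 - ξ ^ 2)))⁻¹ := by
    rw [Real.sqrt_mul (by positivity) (1 - ξ ^ 2), ← mul_inv, ← mul_assoc,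
      Real.mul_self_sqrt (by positivity), one_div]
  have hexponent : -(p.1 ^ 2 - 2 * ξ * p.1 * p.2 + p.2 ^ 2) / (2 * (1 - ξ ^ 2)) =
      -p.1 ^ 2 / 2 + -(p.2 - ξ * p.1) ^ 2 / (2 * (1 - ξ ^ 2)) := by
    field_simp
    ring
  rw [bivariateGaussianPDFReal, hconst, hexponent, Real.exp_add, mul_mul_mul_comm,
    gaussianPDFReal, gaussianPDFReal, Real.coe_toNNReal _ hvar.le, NNReal.coe_one, mul_one,
    mul_one, sub_zero]

lemma gaussianReal_map_const_add_sqrt_mul (m : ℝ) {v : ℝ} (hv : 0 ≤ v) :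
    (gaussianReal 0 1).map (fun y ↦ m + √v * y) = gaussianReal m v.toNNReal := by
  have hvar : NNReal.mk (√v ^ 2) (sq_nonneg _) = v.toNNReal := by
    ext
    simp [hv]
  rw [← Function.comp_def (m + ·) (√v * ·), ← Measure.map_map (by fun_prop) (by fun_prop),
    gaussianReal_map_const_mul, gaussianReal_map_const_add, mul_zero, zero_add, mul_one, hvar]

lemma lintegral_gaussianReal_eq_lintegral_mul {m : ℝ} {v : ℝ≥0} (hv : v ≠ 0)
    (g : ℝ → ℝ≥0∞) :
    ∫⁻ x, g x ∂gaussianReal m v = ∫⁻ x, gaussianPDF m v x * g x := by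
  rw [gaussianReal_of_var_ne_zero _ hv]
  exact lintegral_withDensity_eq_lintegral_mul_non_measurable _ (measurable_gaussianPDF m v)
    (.of_forall fun _ ↦ gaussianPDF_lt_top) g

lemma lintegral_bivariateGaussian (hξ : |ξ| ≤ 1) {g : ℝ × ℝ → ℝ≥0∞} (hg : Measurable g) :
    ∫⁻ p, g p ∂bivariateGaussian ξ =
      ∫⁻ u, ∫⁻ v, g (u, v) ∂gaussianReal (ξ * u) (1 - ξ ^ 2).toNNReal ∂gaussianReal 0 1 := by
  have hvar : 0 ≤ 1 - ξ ^ 2 := sub_nonneg.2 ((sq_le_one_iff_abs_le_one ξ).2 hξ)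
  rw [bivariateGaussian, lintegral_map hg (by fun_prop), lintegral_prod _ (by fun_prop)]
  refine lintegral_congr fun u ↦ ?_
  rw [← gaussianReal_map_const_add_sqrt_mul _ hvar, lintegral_map (by fun_prop) (by fun_prop)]

lemma bivariateGaussian_eq_withDensity (hξ : |ξ| < 1) :
    bivariateGaussian ξ = volume.withDensity fun p ↦ .ofReal (bivariateGaussianPDFReal ξ p) := by
  have hvar : (1 - ξ ^ 2).toNNReal ≠ 0 :=
    (Real.toNNReal_pos.2 (sub_pos.2 ((sq_lt_one_iff_abs_lt_one ξ).2 hξ))).ne'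
  have hpdf : Measurable fun p ↦ ENNReal.ofReal (bivariateGaussianPDFReal ξ p) :=
    measurable_bivariateGaussianPDFReal.ennreal_ofReal
  refine Measure.ext_of_lintegral _ fun g hg ↦ ?_
  calc ∫⁻ p, g p ∂bivariateGaussian ξ
    _ = ∫⁻ u, ∫⁻ v, g (u, v) ∂gaussianReal (ξ * u) (1 - ξ ^ 2).toNNReal ∂gaussianReal 0 1 :=
      lintegral_bivariateGaussian hξ.le hg
    _ = ∫⁻ u, gaussianPDF 0 1 u *
          ∫⁻ v, gaussianPDF (ξ * u) (1 - ξ ^ 2).toNNReal v * g (u, v) := by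
      simp_rw [lintegral_gaussianReal_eq_lintegral_mul hvar,
        lintegral_gaussianReal_eq_lintegral_mul one_ne_zero]
    _ = ∫⁻ u, ∫⁻ v, ENNReal.ofReal (bivariateGaussianPDFReal ξ (u, v)) * g (u, v) := by
      refine lintegral_congr fun u ↦ ?_
      rw [← lintegral_const_mul _ (by fun_prop)]
      refine lintegral_congr fun v ↦ ?_
      rw [bivariateGaussianPDFReal_eq_mul hξ, ENNReal.ofReal_mul (gaussianPDFReal_nonneg ..),
        mul_assoc, gaussianPDF, gaussianPDF]
    _ = ∫⁻ p, g p ∂volume.withDensity fun p ↦ .ofReal (bivariateGaussianPDFReal ξ p) := by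
      rw [lintegral_withDensity_eq_lintegral_mul _ hpdf hg, Measure.volume_eq_prod,
        lintegral_prod _ (hpdf.mul hg).aemeasurable]
      rfl

lemma integral_bivariateGaussian_eq_integral_smul {E : Type*} [NormedAddCommGroup E]
    [NormedSpace ℝ E] (hξ : |ξ| < 1) (g : ℝ × ℝ → E) :
    ∫ p, g p ∂bivariateGaussian ξ = ∫ p, bivariateGaussianPDFReal ξ p • g p := by
  rw [bivariateGaussian_eq_withDensity hξ, integral_withDensity_eq_integral_toReal_smul
    measurable_bivariateGaussianPDFReal.ennreal_ofReal (by simp)]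
  simp_rw [ENNReal.toReal_ofReal (bivariateGaussianPDFReal_nonneg _)]

lemma integral_cexp_bivariateGaussian (hξ : |ξ| ≤ 1) (z w : ℂ) :
    ∫ p, cexp (z * p.1 + w * p.2) ∂bivariateGaussian ξ =
      cexp ((z ^ 2 + 2 * ξ * z * w + w ^ 2) / 2) := by
  have hmgf (a : ℂ) : ∫ x : ℝ, cexp (a * x) ∂gaussianReal 0 1 = cexp (a ^ 2 / 2) := by
    simpa [complexMGF] using complexMGF_id_gaussianReal (μ := 0) (v := 1) a
  have hsqrt : (√(1 - ξ ^ 2) : ℂ) ^ 2 = 1 - ξ ^ 2 := by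
    exact_mod_cast Real.sq_sqrt (sub_nonneg.2 ((sq_le_one_iff_abs_le_one ξ).2 hξ))
  calc ∫ p, cexp (z * p.1 + w * p.2) ∂bivariateGaussian ξ
    _ = ∫ p : ℝ × ℝ, cexp ((z + w * ξ) * p.1) * cexp (w * √(1 - ξ ^ 2) * p.2)
          ∂(gaussianReal 0 1).prod (gaussianReal 0 1) := by
      rw [bivariateGaussian, integral_map (by fun_prop) (by fun_prop)]
      refine integral_congr_ae (.of_forall fun p ↦ ?_)
      dsimp only
      rw [← Complex.exp_add]
      push_cast
      ring_nf
    _ = cexp ((z + w * ξ) ^ 2 / 2) * cexp ((w * √(1 - ξ ^ 2)) ^ 2 / 2) := by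
      rw [integral_prod_mul (fun x : ℝ ↦ cexp ((z + w * ξ) * x))
        (fun y : ℝ ↦ cexp (w * √(1 - ξ ^ 2) * y)), hmgf, hmgf]
    _ = cexp ((z ^ 2 + 2 * ξ * z * w + w ^ 2) / 2) := by
      rw [← Complex.exp_add, mul_pow, hsqrt]
      ring_nf

lemma integral_cos_bivariateGaussian (hξ : |ξ| ≤ 1) (s t c : ℝ) :
    ∫ p, Real.cos (s * p.1 + t * p.2 + c) ∂bivariateGaussian ξ =
      rexp (-(s ^ 2 + 2 * ξ * s * t + t ^ 2) / 2) * Real.cos c := by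
  have hre (p : ℝ × ℝ) : Real.cos (s * p.1 + t * p.2 + c) =
      (cexp (s * I * p.1 + t * I * p.2) * cexp (c * I)).re := by
    rw [← exp_ofReal_mul_I_re, ← Complex.exp_add]
    push_cast
    ring_nf
  have hint : Integrable (fun p : ℝ × ℝ ↦ cexp (s * I * p.1 + t * I * p.2) * cexp (c * I))
      (bivariateGaussian ξ) := by
    refine .of_bound (by fun_prop) 1 (.of_forall fun p ↦ ?_)
    simp [Complex.norm_exp]
  have hexponent : ((s * I) ^ 2 + 2 * ξ * (s * I) * (t * I) + (t * I) ^ 2) / 2 =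
      ((-(s ^ 2 + 2 * ξ * s * t + t ^ 2) / 2 : ℝ) : ℂ) := by
    push_cast
    linear_combination (s ^ 2 + 2 * ξ * s * t + t ^ 2) / 2 * I_sq
  simp_rw [hre]
  rw [← RCLike.re_eq_complex_re, integral_re hint, integral_mul_const,
    integral_cexp_bivariateGaussian hξ, hexponent, ← ofReal_exp,
    RCLike.re_eq_complex_re, re_ofReal_mul, exp_ofReal_mul_I_re]

lemma integrable_cos_comp {α : Type*} [MeasurableSpace α] {μ : Measure α} [IsFiniteMeasure μ]
    {f : α → ℝ} (hf : AEMeasurable f μ) : Integrable (fun x ↦ Real.cos (f x)) μ :=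
  .of_bound (by fun_prop) 1 (.of_forall fun _ ↦ Real.abs_cos_le_one _)

lemma integral_sin_mul_sin_bivariateGaussian (hξ : |ξ| ≤ 1) (Ω₁ Ω₂ Φ₁ Φ₂ : ℝ) :
    ∫ p, Real.sin (Ω₁ * p.1 + Φ₁) * Real.sin (Ω₂ * p.2 + Φ₂) ∂bivariateGaussian ξ =
      1 / 2 * rexp (-(Ω₁ ^ 2 + Ω₂ ^ 2) / 2) *
        (rexp (Ω₁ * Ω₂ * ξ) * Real.cos (Φ₁ - Φ₂) -
          rexp (-(Ω₁ * Ω₂ * ξ)) * Real.cos (Φ₁ + Φ₂)) := by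
  have hsin (p : ℝ × ℝ) : Real.sin (Ω₁ * p.1 + Φ₁) * Real.sin (Ω₂ * p.2 + Φ₂) =
      1 / 2 * (Real.cos (Ω₁ * p.1 + -Ω₂ * p.2 + (Φ₁ - Φ₂)) -
        Real.cos (Ω₁ * p.1 + Ω₂ * p.2 + (Φ₁ + Φ₂))) := by
    have h := Real.two_mul_sin_mul_sin (Ω₁ * p.1 + Φ₁) (Ω₂ * p.2 + Φ₂)
    rw [show Ω₁ * p.1 + -Ω₂ * p.2 + (Φ₁ - Φ₂) = Ω₁ * p.1 + Φ₁ - (Ω₂ * p.2 + Φ₂) by ring,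
      show Ω₁ * p.1 + Ω₂ * p.2 + (Φ₁ + Φ₂) = Ω₁ * p.1 + Φ₁ + (Ω₂ * p.2 + Φ₂) by ring]
    linarith
  have hexp_sub : rexp (-(Ω₁ ^ 2 + 2 * ξ * Ω₁ * -Ω₂ + (-Ω₂) ^ 2) / 2) =
      rexp (-(Ω₁ ^ 2 + Ω₂ ^ 2) / 2) * rexp (Ω₁ * Ω₂ * ξ) := by
    rw [← Real.exp_add]
    ring_nf
  have hexp_add : rexp (-(Ω₁ ^ 2 + 2 * ξ * Ω₁ * Ω₂ + Ω₂ ^ 2) / 2) =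
      rexp (-(Ω₁ ^ 2 + Ω₂ ^ 2) / 2) * rexp (-(Ω₁ * Ω₂ * ξ)) := by
    rw [← Real.exp_add]
    ring_nf
  simp_rw [hsin]
  rw [integral_const_mul, integral_sub (integrable_cos_comp (by fun_prop))
    (integrable_cos_comp (by fun_prop)), integral_cos_bivariateGaussian hξ,
    integral_cos_bivariateGaussian hξ, hexp_sub, hexp_add]
  ring

end BivariateGaussian

/-- Let `|ξ| < 1` and let
`f (u, v) = (1/(2π√(1-ξ²))) exp (-(u² - 2ξuv + v²)/(2(1-ξ²)))` be the standard bivariate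
normal density with correlation `ξ`.  Then for all real `Ω₁ Ω₂ Φ₁ Φ₂`,
`∫_{ℝ²} sin (Ω₁ u + Φ₁) sin (Ω₂ v + Φ₂) f (u, v) du dv
  = (1/2) e^{-(Ω₁² + Ω₂²)/2} (e^{Ω₁Ω₂ξ} cos (Φ₁ - Φ₂) - e^{-Ω₁Ω₂ξ} cos (Φ₁ + Φ₂))`. -/
theorem integral_sin_sin_bivariate_gaussian (ξ : ℝ) (hξ : |ξ| < 1) (Ω₁ Ω₂ Φ₁ Φ₂ : ℝ) :
    ∫ p : ℝ × ℝ,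
        Real.sin (Ω₁ * p.1 + Φ₁) * Real.sin (Ω₂ * p.2 + Φ₂) *
          (1 / (2 * π * Real.sqrt (1 - ξ ^ 2)) *
            Real.exp (-(p.1 ^ 2 - 2 * ξ * p.1 * p.2 + p.2 ^ 2) / (2 * (1 - ξ ^ 2)))) =
      (1 / 2) * Real.exp (-(Ω₁ ^ 2 + Ω₂ ^ 2) / 2) *
        (Real.exp (Ω₁ * Ω₂ * ξ) * Real.cos (Φ₁ - Φ₂) -
          Real.exp (-(Ω₁ * Ω₂ * ξ)) * Real.cos (Φ₁ + Φ₂)) := by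
  calc _ = ∫ p, bivariateGaussianPDFReal ξ p •
          (Real.sin (Ω₁ * p.1 + Φ₁) * Real.sin (Ω₂ * p.2 + Φ₂)) :=
        integral_congr_ae (.of_forall fun _ ↦ mul_comm _ _)
    _ = ∫ p, Real.sin (Ω₁ * p.1 + Φ₁) * Real.sin (Ω₂ * p.2 + Φ₂) ∂bivariateGaussian ξ :=
        (integral_bivariateGaussian_eq_integral_smul hξ _).symm
    _ = _ := integral_sin_mul_sin_bivariateGaussian hξ.le Ω₁ Ω₂ Φ₁ Φ₂
end

section
/- Let τ ≥ 1 and let C, Ω, Φ ∈ ℝ^τ. Define the STAF activation ρ*(x) = Σ_{i=1}^τ C_i sin(Ω_i x + Φ_i). Let ξ be a real number with |ξ| < 1 and let f(u, v) = (1/(2π√(1−ξ²))) exp(−(u² − 2ξuv + v²)/(2(1−ξ²))). Then the dual activation ρ̌*(ξ) := ∫_{ℝ²} ρ*(u) ρ*(v) f(u, v) du dv equals (1/2) Σ_{i=1}^τ Σ_{j=1}^τ C_i C_j e^{−(Ω_i² + Ω_j²)/2} ( e^{Ω_iΩ_jξ} cos(Φ_i − Φ_j) − e^{−Ω_iΩ_jξ}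 cos(Φ_i + Φ_j) ). -/
open Real MeasureTheory

/-- The STAF activation with parameters `C Ω Φ : Fin τ → ℝ`:
`ρ*(x) = Σ_{i} C i * sin (Ω i * x + Φ i)`. -/
noncomputable def stafActivation {τ : ℕ} (C Ω Φ : Fin τ → ℝ) (x : ℝ) : ℝ :=
  ∑ i, C i * Real.sin (Ω i * x + Φ i)

/-!
The density factors as `f(u, v) = φ(u) ψᵤ(v)`, where `φ` is the standard normal density and `ψᵤ` is
the density of the conditional law `N(ξ u, 1 - ξ²)` of `V` given `U = u`. Integrating out `V` and
then `U` with the characteristic function of a one-dimensional Gaussian evaluates the expectation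
of `cos (a U + b V + c)`, and the product-to-sum formula reduces `sin · sin` to such cosines.
-/

section BivariateGaussian

open ProbabilityTheory
open scoped NNReal

lemma integral_cos_mul_add_gaussianReal (μ : ℝ) (v : ℝ≥0) (t c : ℝ) :
    ∫ x, cos (t * x + c) ∂gaussianReal μ v = exp (-(v * t ^ 2) / 2) * cos (t * μ + c) := by
  have integrable_exp : Integrable (fun x : ℝ ↦ Complex.exp (↑(t * x + c) * Complex.I))
      (gaussianReal μ v) :=
    Integrable.of_bound (by fun_prop) 1 (.of_forall fun x ↦ (Complex.norm_exp_ofReal_mul_I _).le)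
  have integral_exp : ∫ x : ℝ, Complex.exp (↑(t * x + c) * Complex.I) ∂gaussianReal μ v =
      ↑(exp (-(v * t ^ 2) / 2)) * Complex.exp (↑(t * μ + c) * Complex.I) := by
    calc ∫ x : ℝ, Complex.exp (↑(t * x + c) * Complex.I) ∂gaussianReal μ v
        = charFun (gaussianReal μ v) t * Complex.exp (c * Complex.I) := by
          rw [charFun_apply_real, ← integral_mul_const]
          simp only [← Complex.exp_add, ← add_mul, Complex.ofReal_add, Complex.ofReal_mul]
      _ = ↑(exp (-(v * t ^ 2) / 2)) * Complex.exp (↑(t * μ + c) * Complex.I) := by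
          rw [charFun_gaussianReal, Complex.ofReal_exp, ← Complex.exp_add, ← Complex.exp_add]
          push_cast
          ring_nf
  calc ∫ x, cos (t * x + c) ∂gaussianReal μ v
      = ∫ x : ℝ, (Complex.exp (↑(t * x + c) * Complex.I)).re ∂gaussianReal μ v := by
        simp only [Complex.exp_ofReal_mul_I_re]
    _ = (∫ x : ℝ, Complex.exp (↑(t * x + c) * Complex.I) ∂gaussianReal μ v).re :=
        integral_re integrable_exp
    _ = exp (-(v * t ^ 2) / 2) * cos (t * μ + c) := by
        rw [integral_exp, Complex.re_ofReal_mul, Complex.exp_ofReal_mul_I_re]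

/-- The density of the centred bivariate normal distribution with unit variances and correlation
`ξ`, meaningful for `|ξ| < 1`. -/
noncomputable def stdBivariateGaussianPDF (ξ : ℝ) (p : ℝ × ℝ) : ℝ :=
  1 / (2 * π * √(1 - ξ ^ 2)) *
    exp (-(p.1 ^ 2 - 2 * ξ * p.1 * p.2 + p.2 ^ 2) / (2 * (1 - ξ ^ 2)))

@[fun_prop]
lemma continuous_stdBivariateGaussianPDF (ξ : ℝ) : Continuous (stdBivariateGaussianPDF ξ) := by
  unfold stdBivariateGaussianPDF
  fun_prop

lemma one_sub_sq_pos_of_abs_lt_one {ξ : ℝ} (hξ : |ξ| < 1) : 0 < 1 - ξ ^ 2 :=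
  sub_pos.2 ((sq_lt_one_iff_abs_lt_one ξ).2 hξ)

lemma stdBivariateGaussianPDF_eq_mul {ξ : ℝ} (hξ : |ξ| < 1) (u v : ℝ) :
    stdBivariateGaussianPDF ξ (u, v) =
      gaussianPDFReal 0 1 u * gaussianPDFReal (ξ * u) (1 - ξ ^ 2).toNNReal v := by
  have variance_pos : 0 < 1 - ξ ^ 2 := one_sub_sq_pos_of_abs_lt_one hξ
  have normalization : √(2 * π) * √(2 * π * (1 - ξ ^ 2)) = 2 * π * √(1 - ξ ^ 2) := by
    rw [sqrt_mul (by positivity) (1 - ξ ^ 2), ← mul_assoc, mul_self_sqrt (by positivity)]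
  have exponent : -(u ^ 2 - 2 * ξ * u * v + v ^ 2) / (2 * (1 - ξ ^ 2)) =
      -u ^ 2 / 2 + -(v - ξ * u) ^ 2 / (2 * (1 - ξ ^ 2)) := by
    field_simp
    ring
  simp only [stdBivariateGaussianPDF, gaussianPDFReal, coe_toNNReal _ variance_pos.le,
    NNReal.coe_one, mul_one, sub_zero]
  rw [← normalization, exponent, exp_add, one_div, mul_inv, mul_mul_mul_comm]

lemma integrable_stdBivariateGaussianPDF {ξ : ℝ} (hξ : |ξ| < 1) :
    Integrable (stdBivariateGaussianPDF ξ) := by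
  have variance_ne_zero : (1 - ξ ^ 2).toNNReal ≠ 0 :=
    (toNNReal_pos.2 (one_sub_sq_pos_of_abs_lt_one hξ)).ne'
  refine (integrable_prod_iff (by fun_prop)).2 ⟨.of_forall fun u ↦ ?_, ?_⟩
  · simpa only [stdBivariateGaussianPDF_eq_mul hξ] using
      (integrable_gaussianPDFReal _ _).const_mul _
  · simpa only [stdBivariateGaussianPDF_eq_mul hξ, norm_of_nonneg
      (mul_nonneg (gaussianPDFReal_nonneg _ _ _) (gaussianPDFReal_nonneg _ _ _)),
      integral_const_mul, integral_gaussianPDFReal_eq_one _ variance_ne_zero, mul_one] using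
      integrable_gaussianPDFReal 0 1

lemma integral_stdBivariateGaussianPDF_smul {E : Type*} [NormedAddCommGroup E] [NormedSpace ℝ E]
    {ξ : ℝ} (hξ : |ξ| < 1) {f : ℝ × ℝ → E}
    (hf : Integrable (fun p ↦ stdBivariateGaussianPDF ξ p • f p)) :
    ∫ p, stdBivariateGaussianPDF ξ p • f p =
      ∫ u, ∫ v, f (u, v) ∂gaussianReal (ξ * u) (1 - ξ ^ 2).toNNReal ∂gaussianReal 0 1 := by
  have variance_ne_zero : (1 - ξ ^ 2).toNNReal ≠ 0 :=
    (toNNReal_pos.2 (one_sub_sq_pos_of_abs_lt_one hξ)).ne'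
  simp only [integral_gaussianReal_eq_integral_smul one_ne_zero,
    integral_gaussianReal_eq_integral_smul variance_ne_zero, ← integral_smul, smul_smul,
    ← stdBivariateGaussianPDF_eq_mul hξ]
  exact integral_prod _ hf

lemma integrable_cos_mul_stdBivariateGaussianPDF {ξ : ℝ} (hξ : |ξ| < 1) (a b c : ℝ) :
    Integrable (fun p : ℝ × ℝ ↦
      cos (a * p.1 + b * p.2 + c) * stdBivariateGaussianPDF ξ p) :=
  (integrable_stdBivariateGaussianPDF hξ).bdd_mul (by fun_prop)
    (.of_forall fun _ ↦ abs_cos_le_one _)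

lemma integral_cos_mul_stdBivariateGaussianPDF {ξ : ℝ} (hξ : |ξ| < 1) (a b c : ℝ) :
    ∫ p : ℝ × ℝ, cos (a * p.1 + b * p.2 + c) * stdBivariateGaussianPDF ξ p =
      exp (-(a ^ 2 + 2 * a * b * ξ + b ^ 2) / 2) * cos c := by
  have conditional_expectation (u : ℝ) :
      ∫ v, cos (a * u + b * v + c) ∂gaussianReal (ξ * u) (1 - ξ ^ 2).toNNReal =
        exp (-((1 - ξ ^ 2) * b ^ 2) / 2) * cos ((a + b * ξ) * u + c) := by
    have arg (v : ℝ) : a * u + b * v + c = b * v + (a * u + c) := by ring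
    have mean_arg : b * (ξ * u) + (a * u + c) = (a + b * ξ) * u + c := by ring
    simp only [arg]
    rw [integral_cos_mul_add_gaussianReal, mean_arg,
      coe_toNNReal _ (one_sub_sq_pos_of_abs_lt_one hξ).le]
  have integrable_cos := integrable_cos_mul_stdBivariateGaussianPDF hξ a b c
  simp only [mul_comm (cos _), ← smul_eq_mul (stdBivariateGaussianPDF _ _)] at integrable_cos ⊢
  rw [integral_stdBivariateGaussianPDF_smul hξ integrable_cos]
  simp only [conditional_expectation, integral_const_mul, integral_cos_mul_add_gaussianReal]
  have exponent : -((1 - ξ ^ 2) * b ^ 2) / 2 + -(1 * (a + b * ξ) ^ 2) / 2 =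
      -(a ^ 2 + 2 * a * b * ξ + b ^ 2) / 2 := by ring
  rw [← mul_assoc, ← exp_add, mul_zero, zero_add, NNReal.coe_one, exponent]

lemma sin_mul_sin_eq_half_cos_sub_cos (x y : ℝ) :
    sin x * sin y = 1 / 2 * (cos (x - y) - cos (x + y)) := by
  rw [← two_mul_sin_mul_sin]
  ring

lemma integrable_sin_mul_sin_mul_stdBivariateGaussianPDF {ξ : ℝ} (hξ : |ξ| < 1)
    (a b c d : ℝ) :
    Integrable (fun p : ℝ × ℝ ↦
      sin (a * p.1 + c) * sin (b * p.2 + d) * stdBivariateGaussianPDF ξ p) :=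
  (integrable_stdBivariateGaussianPDF hξ).bdd_mul (c := 1) (by fun_prop) <| .of_forall fun p ↦ by
    rw [norm_mul]
    exact mul_le_one₀ (abs_sin_le_one _) (norm_nonneg _) (abs_sin_le_one _)

lemma integral_sin_mul_sin_mul_stdBivariateGaussianPDF {ξ : ℝ} (hξ : |ξ| < 1) (a b c d : ℝ) :
    ∫ p : ℝ × ℝ, sin (a * p.1 + c) * sin (b * p.2 + d) * stdBivariateGaussianPDF ξ p =
      1 / 2 * (exp (-(a ^ 2 + b ^ 2) / 2) *
        (exp (a * b * ξ) * cos (c - d) - exp (-(a * b * ξ)) * cos (c + d))) := by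
  have product_to_sum (p : ℝ × ℝ) :
      sin (a * p.1 + c) * sin (b * p.2 + d) * stdBivariateGaussianPDF ξ p =
        1 / 2 * (cos (a * p.1 + -b * p.2 + (c - d)) * stdBivariateGaussianPDF ξ p -
          cos (a * p.1 + b * p.2 + (c + d)) * stdBivariateGaussianPDF ξ p) := by
    have arg_sub : a * p.1 + -b * p.2 + (c - d) = a * p.1 + c - (b * p.2 + d) := by ring
    have arg_add : a * p.1 + b * p.2 + (c + d) = a * p.1 + c + (b * p.2 + d) := by ring
    rw [arg_sub, arg_add, ← sub_mul, ← mul_assoc, ← sin_mul_sin_eq_half_cos_sub_cos]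
  have exponent_sub : -(a ^ 2 + 2 * a * -b * ξ + (-b) ^ 2) / 2 =
      -(a ^ 2 + b ^ 2) / 2 + a * b * ξ := by ring
  have exponent_add : -(a ^ 2 + 2 * a * b * ξ + b ^ 2) / 2 =
      -(a ^ 2 + b ^ 2) / 2 + -(a * b * ξ) := by ring
  simp only [product_to_sum]
  rw [integral_const_mul, integral_sub (integrable_cos_mul_stdBivariateGaussianPDF hξ _ _ _)
    (integrable_cos_mul_stdBivariateGaussianPDF hξ _ _ _),
    integral_cos_mul_stdBivariateGaussianPDF hξ, integral_cos_mul_stdBivariateGaussianPDF hξ,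
    exponent_sub, exponent_add, exp_add, exp_add]
  ring

end BivariateGaussian

lemma stafActivation_mul_stafActivation {τ τ' : ℕ} (C Ω Φ : Fin τ → ℝ) (C' Ω' Φ' : Fin τ' → ℝ)
    (u v : ℝ) :
    stafActivation C Ω Φ u * stafActivation C' Ω' Φ' v =
      ∑ i, ∑ j, C i * C' j * (sin (Ω i * u + Φ i) * sin (Ω' j * v + Φ' j)) := by
  simp only [stafActivation, Finset.sum_mul_sum, mul_mul_mul_comm]

/-- The dual activation of the STAF activation `ρ*` at correlation
`ξ ∈ (-1, 1)`, i.e. `∫_{ℝ²} ρ*(u) ρ*(v) f(u,v) du dv` against the standard bivariate normal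
density `f` with correlation `ξ`, equals
`(1/2) Σ_i Σ_j C_i C_j e^{-(Ω_i² + Ω_j²)/2}
  (e^{Ω_iΩ_jξ} cos (Φ_i - Φ_j) - e^{-Ω_iΩ_jξ} cos (Φ_i + Φ_j))`. -/
theorem staf_dual_activation (τ : ℕ) (hτ : 1 ≤ τ) (C Ω Φ : Fin τ → ℝ)
    (ξ : ℝ) (hξ : |ξ| < 1) :
    ∫ p : ℝ × ℝ,
        stafActivation C Ω Φ p.1 * stafActivation C Ω Φ p.2 *
          (1 / (2 * π * Real.sqrt (1 - ξ ^ 2)) *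
            Real.exp (-(p.1 ^ 2 - 2 * ξ * p.1 * p.2 + p.2 ^ 2) / (2 * (1 - ξ ^ 2)))) =
      (1 / 2) * ∑ i, ∑ j,
        C i * C j * Real.exp (-(Ω i ^ 2 + Ω j ^ 2) / 2) *
          (Real.exp (Ω i * Ω j * ξ) * Real.cos (Φ i - Φ j) -
            Real.exp (-(Ω i * Ω j * ξ)) * Real.cos (Φ i + Φ j)) := by
  change ∫ p : ℝ × ℝ, stafActivation C Ω Φ p.1 * stafActivation C Ω Φ p.2 *
    stdBivariateGaussianPDF ξ p = _
  have integrable_term (i j : Fin τ) : Integrable fun p : ℝ × ℝ ↦ C i * C j *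
      (sin (Ω i * p.1 + Φ i) * sin (Ω j * p.2 + Φ j) * stdBivariateGaussianPDF ξ p) :=
    (integrable_sin_mul_sin_mul_stdBivariateGaussianPDF hξ _ _ _ _).const_mul _
  simp only [stafActivation_mul_stafActivation, Finset.sum_mul, mul_assoc (C _ * C _)]
  rw [integral_finsetSum _ fun i _ ↦ integrable_finsetSum _ fun j _ ↦ integrable_term i j]
  simp only [integral_finsetSum _ fun j _ ↦ integrable_term _ j, integral_const_mul,
    integral_sin_mul_sin_mul_stdBivariateGaussianPDF hξ, Finset.mul_sum,
    mul_left_comm (C _ * C _) (1 / 2)]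
end

section
/- Let τ, F₀, F₁, F₂ be positive natural numbers, let C, Ω, Φ ∈ ℝ^τ (viewed as τ×1 column matrices, with Cᵀ the 1×τ transpose), let W ∈ ℝ^{F₁×F₀}, W′ ∈ ℝ^{F₂×F₁}, z ∈ ℝ^{F₀}, and let ρ : ℝ → ℝ be any function. Write ρ applied entrywise to vectors, let 1_{F₁} ∈ ℝ^{F₁} be the all-ones vector, and define the trainable activation ρ*(x) = Σ_{m=1}^τ C_m ρ(Ω_m x + Φ_m) applied entrywise. Then (Cᵀ ⊗ W′) · ρ( (Ω ⊗ W) z + Φ ⊗ 1_{F₁} ) = W′ · ρ*( W z ), where ⊗ denotes the Kronecker product of matrices (and of a vector with a vector, yielding a vector indexed by pairs). -/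
open Matrix

/-- The trainable activation `ρ*(x) = Σ_m C_m ρ(Ω_m x + Φ_m)`. -/
noncomputable def trainableActivation {τ : ℕ} (C Ω Φ : Fin τ → ℝ) (ρ : ℝ → ℝ) (x : ℝ) : ℝ :=
  ∑ m, C m * ρ (Ω m * x + Φ m)

/-- Kronecker product `a ⊗ B` of a `τ×1` column vector `a` with a `p×q` matrix `B`
(the trivial width-1 column factor is collapsed): block entries `a_i • B`. -/
def colKronMat {τ p q : ℕ} (a : Fin τ → ℝ) (B : Matrix (Fin p) (Fin q) ℝ) :
    Matrix (Fin τ × Fin p) (Fin q) ℝ := fun i j => a i.1 * B i.2 j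

/-- Kronecker product `aᵀ ⊗ B` of a `1×τ` row vector `aᵀ` with a `p×q` matrix `B`
(the trivial height-1 row factor is collapsed): block entries `a_j • B`. -/
def rowKronMat {τ p q : ℕ} (a : Fin τ → ℝ) (B : Matrix (Fin p) (Fin q) ℝ) :
    Matrix (Fin p) (Fin τ × Fin q) ℝ := fun i j => a j.1 * B i j.2

/-- Kronecker product `a ⊗ v` of two column vectors, a vector indexed by pairs. -/
def vecKronVec {τ F : ℕ} (a : Fin τ → ℝ) (v : Fin F → ℝ) : Fin τ × Fin F → ℝ :=
  fun p => a p.1 * v p.2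

/-!
The entries `ρ (Ω k * (W z) j + Φ k)` form a matrix `X` with rows `j` and columns `k`. The hidden
layer is `vec X`, and the vec trick `(Cᵀ ⊗ W') vec X = W' X C` finishes: row `j` of `X C` is
`ρ*` evaluated at `(W z) j`.
-/

section Kronecker

open scoped Kronecker

theorem replicateCol_kronecker_submatrix_mulVec {R ι κ l m : Type*} [NonUnitalSemiring R]
    [Fintype l] (a : κ → R) (B : Matrix m l R) (z : l → R) (i : ι) :
    (replicateCol ι a ⊗ₖ B).submatrix id (Prod.mk i) *ᵥ z = fun p => a p.1 * (B *ᵥ z) p.2 :=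
  funext fun p => smul_dotProduct (a p.1) (B p.2) z

theorem replicateRow_kronecker_submatrix_mulVec_vec {S ι κ m n : Type*}
    [NonUnitalCommSemiring S] [Fintype κ] [Fintype m]
    (c : κ → S) (B : Matrix n m S) (X : Matrix m κ S) (i : ι) :
    (replicateRow ι c ⊗ₖ B).submatrix (Prod.mk i) id *ᵥ vec X = B *ᵥ (X *ᵥ c) := by
  have vec_trick : (replicateRow ι c ⊗ₖ B) *ᵥ vec X = vec (replicateCol ι (B *ᵥ (X *ᵥ c))) := by
    rw [kronecker_mulVec_vec, transpose_replicateRow, Matrix.mul_assoc, ← replicateCol_mulVec,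
      ← replicateCol_mulVec]
  exact funext fun r => congrFun vec_trick (i, r)

/-- `Φ ⊗ 1` is written `fun p => Φ p.1`, since `R` need not have a unit. -/
theorem kronecker_one_block_general {R S κ l m n : Type*} [NonUnitalSemiring R]
    [NonUnitalCommSemiring S] [Fintype κ] [Fintype l] [Fintype m]
    (C : κ → S) (Ω Φ : κ → R) (W : Matrix m l R) (W' : Matrix n m S) (z : l → R) (ρ : R → S) :
    (replicateRow Unit C ⊗ₖ W').submatrix (Prod.mk ()) id *ᵥ
        (fun p => ρ (((replicateCol Unit Ω ⊗ₖ W).submatrix id (Prod.mk ()) *ᵥ z) p + Φ p.1)) =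
      W' *ᵥ fun j => ∑ k, C k * ρ (Ω k * (W *ᵥ z) j + Φ k) := by
  let X : Matrix m κ S := of fun j k => ρ (Ω k * (W *ᵥ z) j + Φ k)
  have activation_eq : X *ᵥ C = fun j => ∑ k, C k * ρ (Ω k * (W *ᵥ z) j + Φ k) :=
    funext fun j => dotProduct_comm (X j) C
  rw [replicateCol_kronecker_submatrix_mulVec, ← activation_eq]
  exact replicateRow_kronecker_submatrix_mulVec_vec C W' X ()

theorem colKronMat_eq_submatrix {τ p q : ℕ} (a : Fin τ → ℝ) (B : Matrix (Fin p) (Fin q) ℝ) :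
    colKronMat a B = (replicateCol Unit a ⊗ₖ B).submatrix id (Prod.mk ()) :=
  rfl

theorem rowKronMat_eq_submatrix {τ p q : ℕ} (a : Fin τ → ℝ) (B : Matrix (Fin p) (Fin q) ℝ) :
    rowKronMat a B = (replicateRow Unit a ⊗ₖ B).submatrix (Prod.mk ()) id :=
  rfl

theorem vecKronVec_one {τ F : ℕ} (a : Fin τ → ℝ) :
    vecKronVec a (fun _ : Fin F => 1) = fun p => a p.1 :=
  funext fun p => mul_one (a p.1)

end Kronecker

/-- `(Cᵀ ⊗ W′) · ρ((Ω ⊗ W) z + Φ ⊗ 1_{F₁}) = W′ · ρ*(W z)`,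
with `ρ` applied entrywise and `1_{F₁}` the all-ones vector. -/
theorem kronecker_one_block (τ F₀ F₁ F₂ : ℕ)
    (hτ : 0 < τ) (h₀ : 0 < F₀) (h₁ : 0 < F₁) (h₂ : 0 < F₂)
    (C Ω Φ : Fin τ → ℝ)
    (W : Matrix (Fin F₁) (Fin F₀) ℝ) (W' : Matrix (Fin F₂) (Fin F₁) ℝ)
    (z : Fin F₀ → ℝ) (ρ : ℝ → ℝ) :
    (rowKronMat C W').mulVec
        (fun p => ρ ((colKronMat Ω W).mulVec z p + vecKronVec Φ (fun _ => 1) p)) =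
      W'.mulVec (fun j => trainableActivation C Ω Φ ρ (W.mulVec z j)) := by
  rw [rowKronMat_eq_submatrix, colKronMat_eq_submatrix, vecKronVec_one]
  exact kronecker_one_block_general C Ω Φ W W' z ρ
end

section
/- (Kronecker-equivalent network, two-layer case.) Let τ, F₀, F₁, F₂ be positive natural numbers, let C, Ω, Φ ∈ ℝ^τ, let W₁ ∈ ℝ^{F₁×F₀}, W₂ ∈ ℝ^{F₂×F₁}, z ∈ ℝ^{F₀}, and let ρ : ℝ → ℝ be any function applied entrywise. Define ρ*(x) = Σ_{m=1}^τ C_m ρ(Ω_m x + Φ_m) applied entrywise. Then the two-layer network with trainable activation equals the output of the Kronecker-equivalent network with base activation ρ: (Cᵀ ⊗ I_{F₂}) · ρ( ((Ω ⊗ Cᵀ) ⊗ W₂) · ρ( (Ω ⊗ W₁) z + Φ ⊗ 1_{F₁} ) + Φ ⊗ 1_{F₂} ) = ρ*( W₂ · ρ*( W₁ z ) ), where ⊗ is the Kronecker product, I_{F₂} is the F₂×F₂ identity, and 1_{F} denotes the all-ones vector in ℝ^{F} (so Φ ⊗ 1_F ∈ ℝ^{τF}). -/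
open Matrix Kronecker

/-- Kronecker product `a ⊗ cᵀ` of a `τ×1` column vector with a `1×τ` row vector
(trivial factors collapsed): the `τ×τ` matrix with entries `a_i c_j`. -/
def colKronRow {τ : ℕ} (a c : Fin τ → ℝ) : Matrix (Fin τ) (Fin τ) ℝ :=
  fun i j => a i * c j

/-! The mixed-product property factors the hidden weight as `(Ω ⊗ Cᵀ) ⊗ W₂ = (Ω ⊗ W₂)(Cᵀ ⊗ I)`.
Hence each `Cᵀ ⊗ I` can be grouped with the activations preceding it, and
`(Cᵀ ⊗ I) ρ((Ω ⊗ W) z + Φ ⊗ 1)` is a single layer `ρ*(W z)` of the original network. -/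

section

variable {R ι κ l m n : Type*}

/-- The Kronecker product `a ⊗ B` of a column vector and a matrix, with columns indexed by
`n` in place of `Unit × n`: it sends a layer's input to all the dilations by `a` of its output. -/
def colKronecker [Mul R] (a : ι → R) (B : Matrix m n R) : Matrix (ι × m) n R :=
  (replicateCol Unit a ⊗ₖ B).submatrix id (Prod.mk ())

/-- The Kronecker product `aᵀ ⊗ B` of a row vector and a matrix, with rows indexed by `m`
in place of `Unit × m`: for `B = 1` it recombines the dilated copies of a layer. -/
def rowKronecker [Mul R] (a : ι → R) (B : Matrix m n R) : Matrix m (ι × n) R :=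
  (replicateRow Unit a ⊗ₖ B).submatrix (Prod.mk ()) id

/-- The trainable activation `ρ*` over a semiring, with its terms indexed by a finite type. -/
def combinedActivation [NonUnitalNonAssocSemiring R] [Fintype ι] (C Ω Φ : ι → R) (ρ : R → R)
    (x : R) : R :=
  ∑ k, C k * ρ (Ω k * x + Φ k)

theorem colKronecker_mul_rowKronecker [CommSemiring R] [Fintype m] (a : ι → R) (c : κ → R)
    (A : Matrix l m R) (B : Matrix m n R) :
    colKronecker a A * rowKronecker c B = vecMulVec a c ⊗ₖ (A * B) := by
  rw [vecMulVec_eq Unit, mul_kronecker_mul]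
  exact submatrix_mul_equiv _ _ id (Equiv.uniqueProd m Unit).symm id

theorem colKronecker_mulVec_apply [NonUnitalSemiring R] [Fintype n] (a : ι → R)
    (B : Matrix m n R) (v : n → R) (p : ι × m) :
    (colKronecker a B *ᵥ v) p = a p.1 * (B *ᵥ v) p.2 := by
  simp only [colKronecker, mulVec, dotProduct, submatrix_apply, kroneckerMap_apply,
    replicateCol_apply, id, mul_assoc, Finset.mul_sum]

theorem rowKronecker_one_mulVec_apply [NonAssocSemiring R] [Fintype ι] [Fintype m] [DecidableEq m]
    (c : ι → R) (v : ι × m → R) (i : m) :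
    (rowKronecker c 1 *ᵥ v) i = ∑ k, c k * v (k, i) := by
  simp [rowKronecker, mulVec, dotProduct, Fintype.sum_prod_type, one_apply]

theorem rowKronecker_one_mulVec_activation [Semiring R] [Fintype ι] [Fintype m] [DecidableEq m]
    [Fintype n] (C Ω Φ : ι → R) (ρ : R → R) (W : Matrix m n R) (z : n → R) :
    rowKronecker C 1 *ᵥ (fun p => ρ ((colKronecker Ω W *ᵥ z) p + Φ p.1)) =
      fun i => combinedActivation C Ω Φ ρ ((W *ᵥ z) i) := by
  funext i
  simp only [rowKronecker_one_mulVec_apply, colKronecker_mulVec_apply, combinedActivation]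

theorem kronecker_equivalent_two_layer_general [CommSemiring R] [Fintype ι] [Fintype κ]
    [Fintype l] [Fintype m] [Fintype n] [DecidableEq l]
    (C₁ Ω₁ Φ₁ : ι → R) (C₂ Ω₂ Φ₂ : κ → R) (ρ₁ ρ₂ : R → R)
    (W₁ : Matrix m n R) (W₂ : Matrix l m R) (z : n → R) :
    rowKronecker C₂ 1 *ᵥ
        (fun p => ρ₂
          (((vecMulVec Ω₂ C₁ ⊗ₖ W₂) *ᵥ
              (fun q => ρ₁ ((colKronecker Ω₁ W₁ *ᵥ z) q + Φ₁ q.1))) p + Φ₂ p.1)) =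
      fun i => combinedActivation C₂ Ω₂ Φ₂ ρ₂
        ((W₂ *ᵥ fun j => combinedActivation C₁ Ω₁ Φ₁ ρ₁ ((W₁ *ᵥ z) j)) i) := by
  classical
  have hidden_weight : vecMulVec Ω₂ C₁ ⊗ₖ W₂ =
      colKronecker Ω₂ W₂ * rowKronecker C₁ (1 : Matrix m m R) := by
    rw [colKronecker_mul_rowKronecker, Matrix.mul_one]
  rw [hidden_weight, ← mulVec_mulVec, rowKronecker_one_mulVec_activation,
    rowKronecker_one_mulVec_activation]

end

/-- **Kronecker-equivalent network, two-layer case.**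
`(Cᵀ ⊗ I_{F₂}) · ρ(((Ω ⊗ Cᵀ) ⊗ W₂) · ρ((Ω ⊗ W₁) z + Φ ⊗ 1_{F₁}) + Φ ⊗ 1_{F₂})
  = ρ*(W₂ · ρ*(W₁ z))`, with `ρ` applied entrywise; `⊗ₖ` is Mathlib's Kronecker
product of matrices. -/
theorem kronecker_equivalent_two_layer (τ F₀ F₁ F₂ : ℕ)
    (hτ : 0 < τ) (h₀ : 0 < F₀) (h₁ : 0 < F₁) (h₂ : 0 < F₂)
    (C Ω Φ : Fin τ → ℝ)
    (W₁ : Matrix (Fin F₁) (Fin F₀) ℝ) (W₂ : Matrix (Fin F₂) (Fin F₁) ℝ)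
    (z : Fin F₀ → ℝ) (ρ : ℝ → ℝ) :
    (rowKronMat C (1 : Matrix (Fin F₂) (Fin F₂) ℝ)).mulVec
        (fun p => ρ
          (((colKronRow Ω C ⊗ₖ W₂).mulVec
              (fun q => ρ ((colKronMat Ω W₁).mulVec z q + vecKronVec Φ (fun _ => 1) q))) p +
            vecKronVec Φ (fun _ => 1) p)) =
      fun i => trainableActivation C Ω Φ ρ
        (W₂.mulVec (fun j => trainableActivation C Ω Φ ρ (W₁.mulVec z j)) i) := by
  simp only [vecKronVec, mul_one]
  exact kronecker_equivalent_two_layer_general C Ω Φ C Ω Φ ρ ρ W₁ W₂ z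
end

section
/- Let A be a D×T real matrix such that some row of A has all entries rational. Then for every ε > 0 there exists a D×T real matrix Â with |Â_{i,j} − A_{i,j}| < ε for all indices i, j, such that the kernel of Â contains no nonzero rational vector: for every s ∈ ℚ^T, if Â · s = 0 (viewing s as a real vector) then s = 0. -/
open Matrix

/-!
A row whose entries are linearly independent over `ℚ` is not orthogonal to any nonzero rational
vector, so it suffices to make one row of `A` such. Its entries can be moved one at a time: the
`ℚ`-span of the entries already chosen is countable, whereas the open ball in which the next entry
may be chosen is not.
-/

theorem exists_linearIndependent_forall_mem {K E ι : Type*} [DivisionRing K] [Countable K]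
    [AddCommGroup E] [Module K E] [Finite ι] (S : ι → Set E) (hS : ∀ i, ¬(S i).Countable) :
    ∃ w : ι → E, LinearIndependent K w ∧ ∀ i, w i ∈ S i := by
  induction ι using Finite.induction_empty_option with
  | of_equiv e ih =>
    obtain ⟨w, hw, hwS⟩ := ih (S ∘ e) fun i => hS (e i)
    exact ⟨w ∘ e.symm, hw.comp _ e.symm.injective, fun i => by simpa using hwS (e.symm i)⟩
  | h_empty => exact ⟨isEmptyElim, linearIndependent_empty_type, isEmptyElim⟩
  | h_option ih =>
    obtain ⟨w, hw, hwS⟩ := ih (S ∘ some) fun i => hS (some i)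
    have span_countable : (Submodule.span K (Set.range w) : Set E).Countable :=
      Set.countable_coe_iff.mp (inferInstanceAs (Countable (Submodule.span K (Set.range w))))
    obtain ⟨x, hxS, hx⟩ : ∃ x ∈ S none, x ∉ Submodule.span K (Set.range w) :=
      Set.not_subset.mp fun h => hS none (span_countable.mono h)
    refine ⟨fun o => o.casesOn' x w, hw.option hx, ?_⟩
    rintro (_ | i)
    exacts [hxS, hwS i]

theorem not_countable_of_isOpen {E : Type*} (𝕜 : Type*) [NontriviallyNormedField 𝕜]
    [CompleteSpace 𝕜] [AddCommGroup E] [Module 𝕜 E] [Nontrivial E] [TopologicalSpace E]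
    [ContinuousAdd E] [ContinuousSMul 𝕜 E] {U : Set E} (hU : IsOpen U) (hne : U.Nonempty) :
    ¬U.Countable := fun hc =>
  let ⟨_, hx, hxc⟩ := (hc.dense_compl 𝕜).inter_open_nonempty U hU hne
  hxc hx

theorem exists_linearIndependent_norm_sub_lt (K 𝕜 : Type*) {E ι : Type*} [DivisionRing K]
    [Countable K] [NontriviallyNormedField 𝕜] [CompleteSpace 𝕜] [NormedAddCommGroup E]
    [NormedSpace 𝕜 E] [Nontrivial E] [Module K E] [Finite ι] (v : ι → E) {ε : ℝ} (hε : 0 < ε) :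
    ∃ w : ι → E, LinearIndependent K w ∧ ∀ i, ‖w i - v i‖ < ε := by
  simpa only [mem_ball_iff_norm] using
    exists_linearIndependent_forall_mem (K := K) (fun i => Metric.ball (v i) ε) fun i =>
      not_countable_of_isOpen 𝕜 Metric.isOpen_ball (Metric.nonempty_ball.mpr hε)

theorem eq_zero_of_mulVec_algebraMap_eq_zero {K R m n : Type*} [CommRing K] [CommRing R]
    [Algebra K R] [Fintype n] {A : Matrix m n R} {r : m} (hr : LinearIndependent K (A r))
    {s : n → K} (hs : A *ᵥ (algebraMap K R ∘ s) = 0) : s = 0 := by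
  have relation : ∑ j, s j • A r j = 0 := by
    simpa only [mulVec, dotProduct, Function.comp_apply, Pi.zero_apply, Algebra.smul_def, mul_comm]
      using congrFun hs r
  exact funext (Fintype.linearIndependent_iff.mp hr s relation)

theorem perturb_kernel_rational_free_general (K : Type*) {𝕜 m n : Type*} [Field K] [Countable K]
    [NontriviallyNormedField 𝕜] [CompleteSpace 𝕜] [Algebra K 𝕜] [Nonempty m] [Fintype n]
    (A : Matrix m n 𝕜) {ε : ℝ} (hε : 0 < ε) :
    ∃ Ahat : Matrix m n 𝕜, (∀ i j, ‖Ahat i j - A i j‖ < ε) ∧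
      ∀ s : n → K, Ahat *ᵥ (algebraMap K 𝕜 ∘ s) = 0 → s = 0 := by
  classical
  obtain ⟨r⟩ := ‹Nonempty m›
  obtain ⟨w, hw, hwA⟩ := exists_linearIndependent_norm_sub_lt K 𝕜 (A r) hε
  refine ⟨A.updateRow r w, fun i j => ?_, fun s =>
    eq_zero_of_mulVec_algebraMap_eq_zero (r := r) (by rwa [updateRow_self])⟩
  obtain rfl | hi := eq_or_ne i r
  · simpa only [updateRow_self] using hwA j
  · simpa only [updateRow_ne hi, sub_self, norm_zero] using hε

/-- If some row of the real `D×T` matrix `A` has all entries rational,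
then for every `ε > 0` there is a matrix `Â` with `|Â_{ij} - A_{ij}| < ε` for all `i, j`
whose kernel contains no nonzero rational vector. -/
theorem perturb_kernel_rational_free (D T : ℕ) (A : Matrix (Fin D) (Fin T) ℝ)
    (hrow : ∃ r : Fin D, ∀ j : Fin T, ∃ q : ℚ, A r j = (q : ℝ)) :
    ∀ ε : ℝ, 0 < ε →
      ∃ Ahat : Matrix (Fin D) (Fin T) ℝ,
        (∀ i j, |Ahat i j - A i j| < ε) ∧
        ∀ s : Fin T → ℚ, Ahat.mulVec (fun j => (s j : ℝ)) = 0 → s = 0 := by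
  have : Nonempty (Fin D) := hrow.nonempty
  exact fun ε hε => perturb_kernel_rational_free_general ℚ A hε
end
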